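/- Let R > 1 and Γ*(x) := min{|x|^{−(N−2s)}, R^{−(N−2s)}}. Then for every nonnegative smooth function φ compactly supported in ℝ^N ∖ B̄_R, the (absolutely convergent) integral ∫_{ℝ^N}∫_{ℝ^N} (Γ*(x)−Γ*(y))(φ(x)−φ(y)) |x−y|^{−(N+2s)} dx dy is nonnegative; that is, Γ* is a weak supersolution of the fractional Laplacian in ℝ^N ∖ B̄_R. -/

import Mathlib

open MeasureTheory Filter Topology

noncomputable section

/-- The truncated fundamental solution `Γ*(x) = min{|x|^{−(N−2s)}, R^{−(N−2s)}}`. -/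
def Gammastar (N : ℕ) (s R : ℝ) (x : EuclideanSpace ℝ (Fin N)) : ℝ :=
  min (‖x‖ ^ (-((N : ℝ) - 2 * s))) (R ^ (-((N : ℝ) - 2 * s)))

/-
The inversion `y ↦ y*` in the sphere of radius `‖x‖` has Jacobian `(‖x‖ / ‖y‖) ^ (2 * d)` and
satisfies `‖x - y*‖ = ‖x‖ / ‖y‖ * ‖x - y‖`. Hence averaging `(Γ x - Γ y) * ‖x - y‖ ^ (-(d + 2 * s))`
over `y` and `y*` produces the factor
`(Γ x - Γ y) + (‖x‖ / ‖y‖) ^ (d - 2 * s) * (Γ x - Γ y*)`, which vanishes for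
`Γ = ‖·‖ ^ (-(d - 2 * s))` and so is nonnegative for the truncated `Γ`, equal to that power at `x`
and at most that power elsewhere. To avoid principal values, this is done on the regions
`ε * ‖x‖ * ‖y‖ < ‖x - y‖ ^ 2`, where everything converges absolutely; they are symmetric in `x` and
`y`, invariant under the inversion, and exhaust the complement of the diagonal as `ε → 0`.
-/

open EuclideanGeometry Module

section ProductMeasure

variable {α β G : Type*} [MeasurableSpace α] [MeasurableSpace β] {μ : Measure α} {ν : Measure β}
  [SFinite μ] [SFinite ν]

lemma setIntegral_prod_nonneg_of_slices {f : α × β → ℝ} {A : Set (α × β)} (hA : MeasurableSet A)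
    (hf : IntegrableOn f A (μ.prod ν))
    (hslice : ∀ x, IntegrableOn (fun y => f (x, y)) (Prod.mk x ⁻¹' A) ν →
      0 ≤ ∫ y in Prod.mk x ⁻¹' A, f (x, y) ∂ν) :
    0 ≤ ∫ z in A, f z ∂μ.prod ν := by
  have hf' : Integrable (A.indicator f) (μ.prod ν) := hf.integrable_indicator hA
  rw [← integral_indicator hA, integral_prod _ hf']
  refine integral_nonneg_of_ae ?_
  filter_upwards [hf'.prod_right_ae] with x hx
  have hmeas : MeasurableSet (Prod.mk x ⁻¹' A) := measurable_prodMk_left hA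
  have hind : (fun y => A.indicator f (x, y)) =
      (Prod.mk x ⁻¹' A).indicator fun y => f (x, y) := rfl
  rw [hind, integrable_indicator_iff hmeas] at hx
  rw [hind, integral_indicator hmeas]
  exact hslice x hx

lemma setIntegral_add_comp_swap [NormedAddCommGroup G] [NormedSpace ℝ G] {f : α × α → G}
    {A : Set (α × α)} (hA : Prod.swap ⁻¹' A = A) (hf : IntegrableOn f A (μ.prod μ)) :
    ∫ z in A, (f z + f z.swap) ∂μ.prod μ = (2 : ℝ) • ∫ z in A, f z ∂μ.prod μ := by
  have hswap : MeasurePreserving Prod.swap (μ.prod μ) (μ.prod μ) := Measure.measurePreserving_swap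
  have hemb : MeasurableEmbedding (Prod.swap : α × α → α × α) :=
    MeasurableEquiv.prodComm.measurableEmbedding
  have hf' : IntegrableOn (f ∘ Prod.swap) A (μ.prod μ) := by
    rwa [← hswap.integrableOn_comp_preimage hemb, hA] at hf
  have hint : ∫ z in A, f z.swap ∂μ.prod μ = ∫ z in A, f z ∂μ.prod μ := by
    simpa only [hA] using hswap.setIntegral_preimage_emb hemb f A
  calc ∫ z in A, (f z + f z.swap) ∂μ.prod μ
      = ∫ z in A, f z ∂μ.prod μ + ∫ z in A, f z.swap ∂μ.prod μ := integral_add hf hf'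
    _ = (2 : ℝ) • ∫ z in A, f z ∂μ.prod μ := by rw [hint, two_smul]

lemma integrable_mul_comp_sub [AddGroup α] [MeasurableAdd₂ α] [MeasurableNeg α]
    [μ.IsAddRightInvariant] {f k : α → ℝ} (hf : Integrable f μ) (hk : Integrable k μ)
    (hk_even : ∀ x y, k (x - y) = k (y - x)) :
    Integrable (fun z : α × α => f z.1 * k (z.1 - z.2)) (μ.prod μ) := by
  refine (hf.convolution_integrand (ContinuousLinearMap.mul ℝ ℝ) hk).swap.congr
    (Eventually.of_forall fun z => ?_)
  simp [hk_even z.1]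

end ProductMeasure

lemma abs_sub_le_mul_min_one {E : Type*} [SeminormedAddCommGroup E] {u : E → ℝ} {K : NNReal}
    {B : ℝ} (hlip : LipschitzWith K u) (hbound : ∀ x, |u x| ≤ B) (x y : E) :
    |u x - u y| ≤ (2 * B + K) * min 1 ‖x - y‖ := by
  have hB : 0 ≤ B := (abs_nonneg _).trans (hbound x)
  rcases le_total 1 ‖x - y‖ with hxy | hxy
  · rw [min_eq_left hxy]
    linarith [abs_sub (u x) (u y), hbound x, hbound y, K.coe_nonneg]
  · rw [min_eq_right hxy]
    have := hlip.dist_le_mul x y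
    rw [Real.dist_eq, dist_eq_norm] at this
    nlinarith [norm_nonneg (x - y)]

section FractionalKernel

variable {E : Type*} [NormedAddCommGroup E] [NormedSpace ℝ E] {s : ℝ}

/-- The jump kernel `|h|^{-(d+2s)}` of the fractional Laplacian `(-Δ)^s` in dimension `d`, up to
the normalizing constant. -/
def fractionalKernel (s : ℝ) (h : E) : ℝ := ‖h‖ ^ (-((finrank ℝ E : ℝ) + 2 * s))

/-- The integrand `(u(x) - u(y)) (v(x) - v(y)) |x - y|^{-(d+2s)}`, at `z = (x, y)`, of the
Gagliardo bilinear form, which is the weak form of the fractional Laplacian. -/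
def gagliardoIntegrand (s : ℝ) (u v : E → ℝ) (z : E × E) : ℝ :=
  (u z.1 - u z.2) * (v z.1 - v z.2) * fractionalKernel s (z.1 - z.2)

lemma fractionalKernel_nonneg (s : ℝ) (h : E) : 0 ≤ fractionalKernel s h :=
  Real.rpow_nonneg (norm_nonneg h) _

lemma fractionalKernel_sub_comm (s : ℝ) (x y : E) :
    fractionalKernel s (x - y) = fractionalKernel s (y - x) := by
  rw [fractionalKernel, norm_sub_rev, fractionalKernel]

lemma gagliardoIntegrand_eq_add_swap (s : ℝ) (u v : E → ℝ) (z : E × E) :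
    gagliardoIntegrand s u v z = v z.1 * ((u z.1 - u z.2) * fractionalKernel s (z.1 - z.2)) +
      v z.swap.1 * ((u z.swap.1 - u z.swap.2) * fractionalKernel s (z.swap.1 - z.swap.2)) := by
  rw [Prod.fst_swap, Prod.snd_swap, fractionalKernel_sub_comm s z.2 z.1, gagliardoIntegrand]
  ring

lemma norm_gagliardoIntegrand_le {u v : E → ℝ} {K L : NNReal} {B C : ℝ} (hu : LipschitzWith K u)
    (hu_bound : ∀ x, |u x| ≤ B) (hv : LipschitzWith L v) (hv_bound : ∀ x, |v x| ≤ C) (x y : E) :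
    ‖gagliardoIntegrand s u v (x, y)‖ ≤ (2 * B + K) * (2 * C + L) *
      (min 1 (‖x - y‖ ^ 2) * fractionalKernel s (x - y)) := by
  have hmin : min 1 ‖x - y‖ * min 1 ‖x - y‖ = min 1 (‖x - y‖ ^ 2) := by
    rcases le_total 1 ‖x - y‖ with h | h
    · rw [min_eq_left h, min_eq_left (one_le_pow₀ h), one_mul]
    · rw [min_eq_right h, min_eq_right (pow_le_one₀ (norm_nonneg _) h), sq]
  have hu_diff := abs_sub_le_mul_min_one hu hu_bound x y
  calc ‖gagliardoIntegrand s u v (x, y)‖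
      = |u x - u y| * |v x - v y| * fractionalKernel s (x - y) := by
        rw [gagliardoIntegrand, norm_mul, norm_mul, Real.norm_eq_abs, Real.norm_eq_abs,
          Real.norm_of_nonneg (fractionalKernel_nonneg s _)]
    _ ≤ (2 * B + K) * min 1 ‖x - y‖ * ((2 * C + L) * min 1 ‖x - y‖) *
          fractionalKernel s (x - y) :=
        mul_le_mul_of_nonneg_right (mul_le_mul hu_diff (abs_sub_le_mul_min_one hv hv_bound x y)
          (abs_nonneg _) ((abs_nonneg _).trans hu_diff)) (fractionalKernel_nonneg s _)
    _ = _ := by rw [← hmin]; ring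

variable [MeasurableSpace E]

lemma gagliardoIntegrand_congr_ae {μ : Measure E} {u u' : E → ℝ} (hu : u =ᵐ[μ] u')
    (s : ℝ) (v : E → ℝ) : gagliardoIntegrand s u v =ᵐ[μ.prod μ] gagliardoIntegrand s u' v := by
  filter_upwards [Measure.quasiMeasurePreserving_fst.ae hu,
    Measure.quasiMeasurePreserving_snd.ae hu] with z h₁ h₂
  rw [gagliardoIntegrand, h₁, h₂, gagliardoIntegrand]

variable [BorelSpace E]

@[fun_prop]
lemma measurable_fractionalKernel (s : ℝ) : Measurable (fractionalKernel s : E → ℝ) := by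
  unfold fractionalKernel
  fun_prop

variable [FiniteDimensional ℝ E] {μ : Measure E} [μ.IsAddHaarMeasure]

lemma integrableOn_fractionalKernel_setOf_le_norm (hs0 : 0 < s) {r : ℝ} (hr : 0 < r) :
    IntegrableOn (fractionalKernel s) {h : E | r ≤ ‖h‖} μ := by
  set p : ℝ := finrank ℝ E + 2 * s
  have hmajorant : Integrable (fun h : E => (1 / r + 1) ^ p * (1 + ‖h‖) ^ (-p)) μ :=
    (integrable_one_add_norm (by linarith : (finrank ℝ E : ℝ) < p)).const_mul _
  refine hmajorant.integrableOn.mono' (by fun_prop) ((ae_restrict_iff'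
    (measurableSet_le measurable_const measurable_norm)).2 (Eventually.of_forall fun h hh => ?_))
  have hh' : 0 < ‖h‖ := hr.trans_le hh
  have hle : 1 + ‖h‖ ≤ (1 / r + 1) * ‖h‖ := by
    rw [add_mul, one_mul, one_div_mul_eq_div]
    exact add_le_add_left ((one_le_div hr).2 hh) _
  calc ‖fractionalKernel s h‖ = (1 / r + 1) ^ p * ((1 / r + 1) * ‖h‖) ^ (-p) := by
        rw [Real.norm_of_nonneg (fractionalKernel_nonneg s h), fractionalKernel,
          Real.mul_rpow (by positivity) hh'.le, ← mul_assoc, ← Real.rpow_add (by positivity),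
          add_neg_cancel, Real.rpow_zero, one_mul]
    _ ≤ (1 / r + 1) ^ p * (1 + ‖h‖) ^ (-p) := by
        refine mul_le_mul_of_nonneg_left ?_ (by positivity)
        exact Real.rpow_le_rpow_of_nonpos (by positivity) hle (neg_nonpos.2 (by positivity))

variable [Nontrivial E]

lemma integrable_min_one_sq_mul_fractionalKernel (hs0 : 0 < s) (hs1 : s < 1) :
    Integrable (fun h : E => min 1 (‖h‖ ^ 2) * fractionalKernel s h) μ := by
  have hradial {r : ℝ} (hr : 0 < r) (c : ℝ) :
      r ^ (finrank ℝ E - 1) • (c * r ^ (-((finrank ℝ E : ℝ) + 2 * s))) =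
        c * r ^ (-1 - 2 * s) := by
    rw [smul_eq_mul, mul_left_comm, ← Real.rpow_natCast, ← Real.rpow_add hr,
      Nat.cast_pred finrank_pos]
    ring_nf
  refine (integrable_fun_norm_addHaar μ
    (f := fun r : ℝ => min 1 (r ^ 2) * r ^ (-((finrank ℝ E : ℝ) + 2 * s)))).2 ?_
  rw [← Set.Ioc_union_Ioi_eq_Ioi zero_le_one]
  refine IntegrableOn.union ?near ?far
  case near =>
    have hpow : IntegrableOn (fun r : ℝ => r ^ (1 - 2 * s)) (Set.Ioc 0 1) := by
      rw [integrableOn_Ioc_iff_integrableOn_Ioo, intervalIntegral.integrableOn_Ioo_rpow_iff one_pos]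
      linarith
    refine hpow.congr_fun (fun r ⟨hr0, hr1⟩ => ?_) measurableSet_Ioc
    dsimp only
    rw [hradial hr0, min_eq_right (pow_le_one₀ hr0.le hr1), ← Real.rpow_two, ← Real.rpow_add hr0]
    ring_nf
  case far =>
    have hpow : IntegrableOn (fun r : ℝ => r ^ (-1 - 2 * s)) (Set.Ioi 1) :=
      integrableOn_Ioi_rpow_of_lt (by linarith) one_pos
    refine hpow.congr_fun (fun r hr => ?_) measurableSet_Ioi
    rw [Set.mem_Ioi] at hr
    dsimp only
    rw [hradial (one_pos.trans hr), min_eq_left (one_le_pow₀ hr.le), one_mul]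

theorem integrable_gagliardoIntegrand (hs0 : 0 < s) (hs1 : s < 1) {u v : E → ℝ} {K L : NNReal}
    {B : ℝ} (hu : LipschitzWith K u) (hu_bound : ∀ x, |u x| ≤ B) (hv : LipschitzWith L v)
    (hv_supp : HasCompactSupport v) : Integrable (gagliardoIntegrand s u v) (μ.prod μ) := by
  obtain ⟨C, hC⟩ := hv_supp.exists_bound_of_continuous hv.continuous
  set ℓ : E → ℝ := fun h => min 1 (‖h‖ ^ 2) * fractionalKernel s h with hℓ
  set χ : E → ℝ := (tsupport v).indicator 1 with hχ
  set M : ℝ := (2 * B + K) * (2 * C + L)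
  have hχ_int : Integrable χ μ :=
    (integrable_indicator_iff hv_supp.measurableSet).2
      (integrableOn_const hv_supp.measure_lt_top.ne)
  have hχ_nonneg (x : E) : 0 ≤ χ x := Set.indicator_nonneg (fun _ _ => zero_le_one) x
  have hℓ_even (x y : E) : ℓ (x - y) = ℓ (y - x) := by
    simp only [hℓ, norm_sub_rev x y, fractionalKernel_sub_comm s x y]
  have hfst : Integrable (fun z : E × E => χ z.1 * ℓ (z.1 - z.2)) (μ.prod μ) :=
    integrable_mul_comp_sub hχ_int (integrable_min_one_sq_mul_fractionalKernel hs0 hs1) hℓ_even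
  refine Integrable.mono' ((hfst.add hfst.swap).const_mul M) ?_
    (Eventually.of_forall fun ⟨x, y⟩ => ?_)
  · have := hu.continuous.measurable
    have := hv.continuous.measurable
    unfold gagliardoIntegrand
    fun_prop
  have hle : ‖gagliardoIntegrand s u v (x, y)‖ ≤ M * ℓ (x - y) :=
    norm_gagliardoIntegrand_le hu hu_bound hv hC x y
  have hMℓ : 0 ≤ M * ℓ (x - y) := (norm_nonneg _).trans hle
  suffices ‖gagliardoIntegrand s u v (x, y)‖ ≤ (χ x + χ y) * (M * ℓ (x - y)) by
    simpa [hℓ_even y x, mul_add, add_mul, mul_left_comm, mul_assoc] using this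
  by_cases hxy : x ∈ tsupport v ∨ y ∈ tsupport v
  · have hone : 1 ≤ χ x + χ y := by
      rcases hxy with h | h
      · simpa [hχ, h] using hχ_nonneg y
      · simpa [hχ, h] using hχ_nonneg x
    exact hle.trans (le_mul_of_one_le_left hMℓ hone)
  · obtain ⟨hx, hy⟩ := not_or.1 hxy
    rw [gagliardoIntegrand, image_eq_zero_of_notMem_tsupport hx,
      image_eq_zero_of_notMem_tsupport hy]
    simpa using mul_nonneg (add_nonneg (hχ_nonneg x) (hχ_nonneg y)) hMℓ

end FractionalKernel

section FarFromDiagonal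

variable {E : Type*} [NormedAddCommGroup E]

/-- The pairs at distance more than `√(ε |x| |y|)` from each other. A cutoff of the diagonal of this
shape is compatible both with exchanging `x` and `y` and with the inversion of `y` in the sphere of
radius `|x|`, which multiplies both `|x - y|²` and `|x| |y|` by `(|x| / |y|)²`. -/
def farFromDiagonal (E : Type*) [NormedAddCommGroup E] (ε : ℝ) : Set (E × E) :=
  {z | ε * ‖z.1‖ * ‖z.2‖ < ‖z.1 - z.2‖ ^ 2}

lemma swap_preimage_farFromDiagonal (ε : ℝ) :
    Prod.swap ⁻¹' farFromDiagonal E ε = farFromDiagonal E ε := by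
  ext z
  simp only [farFromDiagonal, Set.mem_preimage, Set.mem_ofPred_eq, Prod.fst_swap, Prod.snd_swap,
    norm_sub_rev z.2, mul_right_comm]

lemma antitone_farFromDiagonal : Antitone (farFromDiagonal E) := fun _ _ hεδ _ hz =>
  lt_of_le_of_lt
    (mul_le_mul_of_nonneg_right (mul_le_mul_of_nonneg_right hεδ (norm_nonneg _)) (norm_nonneg _)) hz

lemma iUnion_farFromDiagonal_one_div :
    ⋃ n : ℕ, farFromDiagonal E (1 / ((n : ℝ) + 1)) = (Set.diagonal E)ᶜ := by
  ext ⟨x, y⟩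
  simp only [Set.mem_iUnion, Set.mem_compl_iff, Set.mem_diagonal_iff]
  constructor
  · rintro ⟨n, hn⟩ rfl
    have : (0 : ℝ) ≤ 1 / (n + 1) * ‖x‖ * ‖x‖ := by positivity
    simp only [farFromDiagonal, Set.mem_ofPred_eq, sub_self, norm_zero] at hn
    linarith
  · intro hxy
    have hlim : Tendsto (fun n : ℕ => 1 / ((n : ℝ) + 1) * ‖x‖ * ‖y‖) atTop (𝓝 0) := by
      simpa using (tendsto_one_div_add_atTop_nhds_zero_nat.mul_const ‖x‖).mul_const ‖y‖
    have hpos : 0 < ‖x - y‖ ^ 2 := pow_pos (norm_pos_iff.2 (sub_ne_zero.2 hxy)) 2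
    exact (hlim.eventually_lt_const hpos).exists

lemma exists_forall_farFromDiagonal_le_norm_sub {ε R : ℝ} (hε : 0 < ε) (hR : 0 < R) :
    ∃ r > 0, ∀ x y : E, R ≤ ‖x‖ → (x, y) ∈ farFromDiagonal E ε → r ≤ ‖x - y‖ := by
  refine ⟨min (R / 2) √(ε * R * (R / 2)), by positivity, fun x y hx hxy => ?_⟩
  rcases le_total ‖y‖ (R / 2) with hy | hy
  · exact (min_le_left _ _).trans (by linarith [norm_sub_norm_le x y])
  · refine (min_le_right _ _).trans (Real.sqrt_le_left (norm_nonneg _) |>.2 ?_)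
    calc ε * R * (R / 2) ≤ ε * ‖x‖ * ‖y‖ := by gcongr
      _ ≤ ‖x - y‖ ^ 2 := hxy.le

variable [MeasurableSpace E] [BorelSpace E] [SecondCountableTopology E]

lemma measurableSet_farFromDiagonal (ε : ℝ) : MeasurableSet (farFromDiagonal E ε) :=
  measurableSet_lt (by fun_prop) (by fun_prop)

lemma integral_nonneg_of_setIntegral_farFromDiagonal_nonneg {ν : Measure (E × E)} {f : E × E → ℝ}
    (hf : Integrable f ν) (hdiag : ∀ x, f (x, x) = 0)
    (hfar : ∀ ε > 0, 0 ≤ ∫ z in farFromDiagonal E ε, f z ∂ν) : 0 ≤ ∫ z, f z ∂ν := by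
  have hmono : Monotone fun n : ℕ => farFromDiagonal E (1 / ((n : ℝ) + 1)) :=
    fun _ _ hmn => antitone_farFromDiagonal (Nat.one_div_le_one_div hmn)
  have hlim := tendsto_setIntegral_of_monotone
    (fun n : ℕ => measurableSet_farFromDiagonal (1 / ((n : ℝ) + 1))) hmono
    (hf.integrableOn (s := ⋃ n : ℕ, farFromDiagonal E (1 / ((n : ℝ) + 1))))
  have hcompl : ∫ z in (Set.diagonal E)ᶜ, f z ∂ν = ∫ z, f z ∂ν :=
    setIntegral_eq_integral_of_forall_compl_eq_zero fun ⟨x, y⟩ hxy => by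
      obtain rfl : x = y := by simpa using hxy
      exact hdiag x
  rw [iUnion_farFromDiagonal_one_div, hcompl] at hlim
  exact ge_of_tendsto' hlim fun n => hfar _ Nat.one_div_pos_of_nat

end FarFromDiagonal

section Inversion

variable {E : Type*} [NormedAddCommGroup E] [InnerProductSpace ℝ E] {x y : E}

lemma norm_inversion_zero (x y : E) : ‖inversion 0 ‖x‖ y‖ = ‖x‖ ^ 2 / ‖y‖ := by
  simpa using dist_inversion_center (0 : E) y ‖x‖

lemma norm_sub_inversion_zero (hx : x ≠ 0) (hy : y ≠ 0) :
    ‖x - inversion 0 ‖x‖ y‖ = ‖x‖ / ‖y‖ * ‖x - y‖ := by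
  have hfix : inversion 0 ‖x‖ x = x := by simpa using inversion_dist_center (0 : E) x
  have h := dist_inversion_inversion hx hy ‖x‖
  rw [hfix, dist_zero_right, dist_zero_right, dist_eq_norm, dist_eq_norm] at h
  have := norm_ne_zero_iff.2 hx
  rw [h]
  field_simp

lemma inversion_mem_farFromDiagonal {ε : ℝ} (hx : x ≠ 0) (hxy : (x, y) ∈ farFromDiagonal E ε) :
    (x, inversion 0 ‖x‖ y) ∈ farFromDiagonal E ε := by
  rcases eq_or_ne y 0 with rfl | hy
  · simpa using hxy
  have : 0 < ‖x‖ := norm_pos_iff.2 hx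
  have : 0 < ‖y‖ := norm_pos_iff.2 hy
  calc ε * ‖x‖ * ‖inversion 0 ‖x‖ y‖ = (‖x‖ / ‖y‖) ^ 2 * (ε * ‖x‖ * ‖y‖) := by
        rw [norm_inversion_zero]; field_simp
    _ < (‖x‖ / ‖y‖) ^ 2 * ‖x - y‖ ^ 2 := by gcongr; exact hxy
    _ = ‖x - inversion 0 ‖x‖ y‖ ^ 2 := by rw [norm_sub_inversion_zero hx hy, mul_pow]

lemma pow_mul_fractionalKernel_sub_inversion (s : ℝ) (hx : x ≠ 0) (hy : y ≠ 0) :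
    (‖x‖ / ‖y‖) ^ (2 * finrank ℝ E) * fractionalKernel s (x - inversion 0 ‖x‖ y) =
      (‖x‖ / ‖y‖) ^ ((finrank ℝ E : ℝ) - 2 * s) * fractionalKernel s (x - y) := by
  have hq : 0 < ‖x‖ / ‖y‖ := div_pos (norm_pos_iff.2 hx) (norm_pos_iff.2 hy)
  rw [fractionalKernel, fractionalKernel, norm_sub_inversion_zero hx hy,
    Real.mul_rpow hq.le (norm_nonneg _), ← mul_assoc, ← Real.rpow_natCast, ← Real.rpow_add hq]
  push_cast
  ring_nf

variable [FiniteDimensional ℝ E]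

lemma abs_det_smul_linearIsometryEquiv (a : ℝ) (L : E ≃ₗᵢ[ℝ] E) :
    |(a • (L : E →L[ℝ] E)).det| = |a| ^ finrank ℝ E := by
  have hL : (L : E →ₗ[ℝ] E).normDet = 1 := L.toLinearIsometry.normDet_eq_one
  calc |(a • (L : E →L[ℝ] E)).det| = (a • (L : E →ₗ[ℝ] E)).normDet :=
        (LinearMap.normDet_eq_abs_det _).symm
    _ = |a| ^ finrank ℝ E := by rw [LinearMap.normDet_smul, hL, mul_one, Real.norm_eq_abs]

lemma abs_det_fderiv_inversion {c : E} (R : ℝ) (hy : y ≠ c) :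
    |(fderiv ℝ (inversion c R) y).det| = (R / dist y c) ^ (2 * finrank ℝ E) := by
  rw [(hasFDerivAt_inversion hy).fderiv, abs_det_smul_linearIsometryEquiv, abs_sq, ← pow_mul]

variable [MeasurableSpace E] [BorelSpace E] {μ : Measure E} [μ.IsAddHaarMeasure]
  {G : Type*} [NormedAddCommGroup G] [NormedSpace ℝ G] {c : E} {R : ℝ} {S : Set E}

lemma integrableOn_image_inversion_iff (hR : R ≠ 0) (hS : MeasurableSet S) (hc : c ∉ S)
    (F : E → G) : IntegrableOn F (inversion c R '' S) μ ↔
      IntegrableOn (fun y => (R / dist y c) ^ (2 * finrank ℝ E) • F (inversion c R y)) S μ := by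
  rw [integrableOn_image_iff_integrableOn_abs_det_fderiv_smul μ hS
    (fun y hy => (hasFDerivAt_inversion
      (ne_of_mem_of_not_mem hy hc)).differentiableAt.hasFDerivAt.hasFDerivWithinAt)
    (inversion_injective c hR).injOn]
  refine integrableOn_congr_fun (fun y hy => ?_) hS
  rw [abs_det_fderiv_inversion R (ne_of_mem_of_not_mem hy hc)]

lemma setIntegral_image_inversion (hR : R ≠ 0) (hS : MeasurableSet S) (hc : c ∉ S) (F : E → G) :
    ∫ y in inversion c R '' S, F y ∂μ =
      ∫ y in S, (R / dist y c) ^ (2 * finrank ℝ E) • F (inversion c R y) ∂μ := by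
  rw [integral_image_eq_integral_abs_det_fderiv_smul μ hS
    (fun y hy => (hasFDerivAt_inversion
      (ne_of_mem_of_not_mem hy hc)).differentiableAt.hasFDerivAt.hasFDerivWithinAt)
    (inversion_injective c hR).injOn]
  refine setIntegral_congr_fun hS fun y hy => ?_
  rw [abs_det_fderiv_inversion R (ne_of_mem_of_not_mem hy hc)]

lemma setIntegral_nonneg_of_add_inversion_nonneg [Nontrivial E] {F : E → ℝ} (hR : R ≠ 0)
    (hS : MeasurableSet S) (hinv : Set.MapsTo (inversion c R) S S) (hF : IntegrableOn F S μ)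
    (hadd : ∀ y ∈ S, y ≠ c →
      0 ≤ F y + (R / dist y c) ^ (2 * finrank ℝ E) * F (inversion c R y)) :
    0 ≤ ∫ y in S, F y ∂μ := by
  set T : Set E := S \ {c}
  have hT_meas : MeasurableSet T := hS.diff (measurableSet_singleton c)
  have hcT : c ∉ T := fun h => h.2 rfl
  have hinvT : Set.MapsTo (inversion c R) T T := fun y hy =>
    ⟨hinv hy.1, fun h => hy.2 ((inversion_eq_center hR).1 h)⟩
  have himage : inversion c R '' T = T :=
    hinvT.image_subset.antisymm fun y hy => ⟨_, hinvT hy, inversion_inversion c hR y⟩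
  have hFT : IntegrableOn F T μ := hF.mono_set Set.sdiff_subset
  have hinv_int := (integrableOn_image_inversion_iff hR hT_meas hcT F).1 (himage.symm ▸ hFT)
  have hinv_eq := setIntegral_image_inversion (μ := μ) hR hT_meas hcT F
  have hsum : 0 ≤ ∫ y in T, (F y + (R / dist y c) ^ (2 * finrank ℝ E) • F (inversion c R y)) ∂μ :=
    setIntegral_nonneg hT_meas fun y hy => hadd y hy.1 hy.2
  rw [integral_add hFT hinv_int, ← hinv_eq, himage] at hsum
  have hST : ∫ y in T, F y ∂μ = ∫ y in S, F y ∂μ :=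
    setIntegral_congr_set (sdiff_null_ae_eq_self (measure_singleton c))
  linarith

end Inversion

section TruncatedRieszKernel

variable {E : Type*} [NormedAddCommGroup E] {a R : ℝ} {x y : E}

/-- The truncated Riesz kernel `min {|x|^{-a}, R^{-a}}`, which is `Γ*` for `a = d - 2s`. It is
written with a maximum because of the junk value `‖0‖ ^ (-a) = 0`, which makes the minimum
discontinuous at the origin. -/
def truncatedRieszKernel (a R : ℝ) (x : E) : ℝ := max ‖x‖ R ^ (-a)

lemma truncatedRieszKernel_of_le_norm (a : ℝ) (hx : R ≤ ‖x‖) :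
    truncatedRieszKernel a R x = ‖x‖ ^ (-a) := by
  rw [truncatedRieszKernel, max_eq_left hx]

lemma truncatedRieszKernel_le_norm_rpow (ha : 0 ≤ a) (R : ℝ) (hx : x ≠ 0) :
    truncatedRieszKernel a R x ≤ ‖x‖ ^ (-a) :=
  Real.rpow_le_rpow_of_nonpos (norm_pos_iff.2 hx) (le_max_left _ _) (neg_nonpos.2 ha)

lemma truncatedRieszKernel_eq_min (ha : 0 ≤ a) (hR : 0 < R) (hx : x ≠ 0) :
    truncatedRieszKernel a R x = min (‖x‖ ^ (-a)) (R ^ (-a)) :=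
  (Real.antitoneOn_rpow_Ioi_of_exponent_nonpos (neg_nonpos.2 ha)).map_max (norm_pos_iff.2 hx) hR

lemma abs_truncatedRieszKernel_le (ha : 0 ≤ a) (hR : 0 < R) (x : E) :
    |truncatedRieszKernel a R x| ≤ R ^ (-a) := by
  rw [truncatedRieszKernel, Real.abs_rpow_of_nonneg (le_max_of_le_left (norm_nonneg x)),
    abs_of_nonneg (le_max_of_le_left (norm_nonneg x))]
  exact Real.rpow_le_rpow_of_nonpos hR (le_max_right _ _) (neg_nonpos.2 ha)

lemma exists_lipschitzWith_truncatedRieszKernel (ha : 0 ≤ a) (hR : 0 < R) :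
    ∃ K, LipschitzWith K (truncatedRieszKernel a R : E → ℝ) := by
  have hrpow : LipschitzOnWith (a * R ^ (-a - 1)).toNNReal (fun r : ℝ => r ^ (-a)) (Set.Ici R) := by
    refine (convex_Ici R).lipschitzOnWith_of_nnnorm_deriv_le (fun r hr => ?_) fun r hr => ?_
    · exact Real.differentiableAt_rpow_const_of_ne _ (hR.trans_le hr).ne'
    · rw [← NNReal.coe_le_coe, coe_nnnorm, Real.coe_toNNReal _ (by positivity),
        Real.deriv_rpow_const, norm_mul, norm_neg, Real.norm_of_nonneg ha,
        Real.norm_of_nonneg (Real.rpow_nonneg (hR.le.trans hr) _)]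
      exact mul_le_mul_of_nonneg_left (Real.rpow_le_rpow_of_nonpos hR hr (by linarith)) ha
  have hmax : LipschitzOnWith 1 (fun x : E => max ‖x‖ R) Set.univ :=
    (lipschitzWith_one_norm.max_const R).lipschitzOnWith
  exact ⟨_, lipschitzOnWith_univ.1 (hrpow.comp hmax fun x _ => le_max_right ‖x‖ R)⟩

lemma truncatedRieszKernel_sub_add_inversion_nonneg [InnerProductSpace ℝ E] (ha : 0 ≤ a)
    (hR : 0 < R) (hx : R ≤ ‖x‖) (hy : y ≠ 0) :
    0 ≤ truncatedRieszKernel a R x - truncatedRieszKernel a R y +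
      (‖x‖ / ‖y‖) ^ a *
        (truncatedRieszKernel a R x - truncatedRieszKernel a R (inversion 0 ‖x‖ y)) := by
  have hx' : 0 < ‖x‖ := hR.trans_le hx
  have hy' : 0 < ‖y‖ := norm_pos_iff.2 hy
  have hinv : inversion 0 ‖x‖ y ≠ 0 := (inversion_eq_center hx'.ne').not.2 hy
  have hscale_x : (‖x‖ / ‖y‖) ^ a * ‖x‖ ^ (-a) = ‖y‖ ^ (-a) := by
    rw [Real.div_rpow hx'.le hy'.le, Real.rpow_neg hx'.le, Real.rpow_neg hy'.le]
    have := (Real.rpow_pos_of_pos hx' a).ne'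
    field_simp
  have hscale_inv : (‖x‖ / ‖y‖) ^ a * ‖inversion 0 ‖x‖ y‖ ^ (-a) = ‖x‖ ^ (-a) := by
    have : ‖inversion 0 ‖x‖ y‖ = ‖x‖ / ‖y‖ * ‖x‖ := by rw [norm_inversion_zero]; ring
    rw [this, Real.mul_rpow (by positivity) hx'.le, ← mul_assoc, ← Real.rpow_add (by positivity),
      add_neg_cancel, Real.rpow_zero, one_mul]
  have hle_y := truncatedRieszKernel_le_norm_rpow ha R hy
  have hle_inv : (‖x‖ / ‖y‖) ^ a * truncatedRieszKernel a R (inversion 0 ‖x‖ y) ≤ ‖x‖ ^ (-a) :=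
    hscale_inv ▸ mul_le_mul_of_nonneg_left (truncatedRieszKernel_le_norm_rpow ha R hinv)
      (by positivity)
  rw [truncatedRieszKernel_of_le_norm a hx, mul_sub, hscale_x]
  linarith

end TruncatedRieszKernel

section Supersolution

variable {E : Type*} [NormedAddCommGroup E] [InnerProductSpace ℝ E] [FiniteDimensional ℝ E]
  [MeasurableSpace E] [BorelSpace E] {μ : Measure E} [μ.IsAddHaarMeasure]
  {s R ε : ℝ} {φ : E → ℝ}

lemma integrableOn_mul_sub_mul_fractionalKernel (hs0 : 0 < s) (hR : 0 < R)
    (hε : 0 < ε) (hφ : Integrable φ μ) (hφ_supp : ∀ x, φ x ≠ 0 → R ≤ ‖x‖) {u : E → ℝ} {B : ℝ}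
    (hu : Measurable u) (hu_bound : ∀ x, |u x| ≤ B) :
    IntegrableOn (fun z : E × E => φ z.1 * ((u z.1 - u z.2) * fractionalKernel s (z.1 - z.2)))
      (farFromDiagonal E ε) (μ.prod μ) := by
  obtain ⟨r, hr, hfar⟩ := exists_forall_farFromDiagonal_le_norm_sub (E := E) hε hR
  set k : E → ℝ := {h | r ≤ ‖h‖}.indicator (fractionalKernel s) with hk
  have hk_int : Integrable k μ :=
    (integrableOn_fractionalKernel_setOf_le_norm hs0 hr).integrable_indicator
      (measurableSet_le measurable_const measurable_norm)
  have hk_even (x y : E) : k (x - y) = k (y - x) := by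
    simp only [hk, Set.indicator, Set.mem_ofPred_eq, norm_sub_rev x y,
      fractionalKernel_sub_comm s x y]
  have hbdd : Integrable (fun z : E × E => (u z.1 - u z.2) * (φ z.1 * k (z.1 - z.2)))
      (μ.prod μ) := by
    refine (integrable_mul_comp_sub hφ hk_int hk_even).bdd_mul (c := B + B)
      (by fun_prop) (Eventually.of_forall fun z => ?_)
    exact (norm_sub_le _ _).trans (add_le_add (hu_bound z.1) (hu_bound z.2))
  refine hbdd.integrableOn.congr_fun (fun z hz => ?_) (measurableSet_farFromDiagonal ε)
  dsimp only
  rcases eq_or_ne (φ z.1) 0 with hφz | hφz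
  · simp only [hφz, zero_mul, mul_zero]
  · have hkz : k (z.1 - z.2) = fractionalKernel s (z.1 - z.2) :=
      Set.indicator_of_mem (s := {h | r ≤ ‖h‖}) (hfar z.1 z.2 (hφ_supp z.1 hφz) hz) _
    rw [hkz, mul_left_comm]

lemma setIntegral_truncatedRieszKernel_sub_mul_fractionalKernel_nonneg [Nontrivial E]
    (hs : 2 * s ≤ finrank ℝ E) (hR : 0 < R) {x : E} (hx : R ≤ ‖x‖)
    (hint : IntegrableOn (fun y => (truncatedRieszKernel (finrank ℝ E - 2 * s) R x -
      truncatedRieszKernel (finrank ℝ E - 2 * s) R y) * fractionalKernel s (x - y))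
      (Prod.mk x ⁻¹' farFromDiagonal E ε) μ) :
    0 ≤ ∫ y in Prod.mk x ⁻¹' farFromDiagonal E ε,
      (truncatedRieszKernel (finrank ℝ E - 2 * s) R x -
        truncatedRieszKernel (finrank ℝ E - 2 * s) R y) * fractionalKernel s (x - y) ∂μ := by
  have hx' : 0 < ‖x‖ := hR.trans_le hx
  have hx0 : x ≠ 0 := norm_pos_iff.1 hx'
  refine setIntegral_nonneg_of_add_inversion_nonneg (c := 0) hx'.ne'
    (measurable_prodMk_left (measurableSet_farFromDiagonal ε))
    (fun y hy => inversion_mem_farFromDiagonal hx0 hy) hint fun y _ hy => ?_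
  rw [dist_zero_right, mul_left_comm, pow_mul_fractionalKernel_sub_inversion s hx0 hy,
    ← mul_assoc, ← add_mul, mul_comm (_ - _) (_ ^ _)]
  exact mul_nonneg (truncatedRieszKernel_sub_add_inversion_nonneg (sub_nonneg.2 hs) hR hx hy)
    (fractionalKernel_nonneg s _)

lemma setIntegral_gagliardoIntegrand_truncatedRieszKernel_nonneg [Nontrivial E] (hs0 : 0 < s)
    (hs : 2 * s ≤ finrank ℝ E) (hR : 0 < R) (hε : 0 < ε) (hφ : Integrable φ μ)
    (hφ_supp : ∀ x, φ x ≠ 0 → R ≤ ‖x‖) (hφ_nonneg : ∀ x, 0 ≤ φ x) :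
    0 ≤ ∫ z in farFromDiagonal E ε,
      gagliardoIntegrand s (truncatedRieszKernel (finrank ℝ E - 2 * s) R) φ z ∂μ.prod μ := by
  set a : ℝ := finrank ℝ E - 2 * s
  have ha : 0 ≤ a := sub_nonneg.2 hs
  obtain ⟨K, hK⟩ := exists_lipschitzWith_truncatedRieszKernel (E := E) ha hR
  have hint := integrableOn_mul_sub_mul_fractionalKernel hs0 hR hε hφ hφ_supp
    hK.continuous.measurable (abs_truncatedRieszKernel_le ha hR)
  simp_rw [gagliardoIntegrand_eq_add_swap]
  rw [setIntegral_add_comp_swap (swap_preimage_farFromDiagonal ε) hint]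
  refine smul_nonneg zero_le_two (setIntegral_prod_nonneg_of_slices
    (measurableSet_farFromDiagonal ε) hint fun x hx => ?_)
  dsimp only at hx ⊢
  rw [integral_const_mul]
  rcases eq_or_ne (φ x) 0 with hφx | hφx
  · rw [hφx, zero_mul]
  · exact mul_nonneg (hφ_nonneg x)
      (setIntegral_truncatedRieszKernel_sub_mul_fractionalKernel_nonneg hs hR (hφ_supp x hφx)
        ((integrable_const_mul_iff (IsUnit.mk0 _ hφx) _).1 hx))

end Supersolution

theorem statement_15_general {E : Type*} [NormedAddCommGroup E] [InnerProductSpace ℝ E]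
    [FiniteDimensional ℝ E] [MeasurableSpace E] [BorelSpace E] (μ : Measure E)
    [μ.IsAddHaarMeasure] {s : ℝ} (hs0 : 0 < s) (hs1 : s < 1) (hs : 2 * s ≤ finrank ℝ E)
    {R : ℝ} (hR : 0 < R) {φ : E → ℝ} {L : NNReal} (hφ : LipschitzWith L φ)
    (hφ_compact : HasCompactSupport φ) (hφ_supp : ∀ x, φ x ≠ 0 → R ≤ ‖x‖)
    (hφ_nonneg : ∀ x, 0 ≤ φ x) :
    Integrable (gagliardoIntegrand s (fun x : E => min (‖x‖ ^ (-((finrank ℝ E : ℝ) - 2 * s)))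
      (R ^ (-((finrank ℝ E : ℝ) - 2 * s)))) φ) (μ.prod μ) ∧
    0 ≤ ∫ z, gagliardoIntegrand s (fun x : E => min (‖x‖ ^ (-((finrank ℝ E : ℝ) - 2 * s)))
      (R ^ (-((finrank ℝ E : ℝ) - 2 * s)))) φ z ∂μ.prod μ := by
  have : Nontrivial E := nontrivial_of_finrank_pos (R := ℝ) (by
    rw [← Nat.cast_pos (α := ℝ)]; linarith)
  have ha : 0 ≤ (finrank ℝ E : ℝ) - 2 * s := sub_nonneg.2 hs
  obtain ⟨K, hK⟩ := exists_lipschitzWith_truncatedRieszKernel (E := E) ha hR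
  have hae := gagliardoIntegrand_congr_ae (μ := μ)
    ((Measure.ae_ne μ 0).mono fun x hx => truncatedRieszKernel_eq_min ha hR hx) s φ
  have hint : Integrable (gagliardoIntegrand s (truncatedRieszKernel _ R) φ) (μ.prod μ) :=
    integrable_gagliardoIntegrand hs0 hs1 hK (abs_truncatedRieszKernel_le ha hR) hφ hφ_compact
  refine ⟨hint.congr hae, integral_congr_ae hae ▸
    integral_nonneg_of_setIntegral_farFromDiagonal_nonneg hint ?_ fun ε hε => ?_⟩
  · simp [gagliardoIntegrand]
  · exact setIntegral_gagliardoIntegrand_truncatedRieszKernel_nonneg hs0 hs hR hε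
      (hφ.continuous.integrable_of_hasCompactSupport hφ_compact) hφ_supp hφ_nonneg

/-- `Γ*` is a weak supersolution of the fractional Laplacian
outside `B̄_R`: for every nonnegative `φ ∈ C_c^∞(ℝ^N ∖ B̄_R)` the integral
`∬ (Γ*(x)−Γ*(y))(φ(x)−φ(y)) |x−y|^{−(N+2s)}` converges absolutely and is `≥ 0`. -/
theorem statement_15 (N : ℕ) (s : ℝ) (hs0 : 0 < s) (hs1 : s < 1) (hN : 2 * s < N)
    (R : ℝ) (hR : 1 < R)
    (φ : EuclideanSpace ℝ (Fin N) → ℝ)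
    (hφ_smooth : ContDiff ℝ (⊤ : ℕ∞) φ) (hφ_supp : HasCompactSupport φ)
    (hφ_loc : tsupport φ ⊆ {x : EuclideanSpace ℝ (Fin N) | R < ‖x‖})
    (hφ_nonneg : ∀ x, 0 ≤ φ x) :
    Integrable (fun z : EuclideanSpace ℝ (Fin N) × EuclideanSpace ℝ (Fin N) =>
      (Gammastar N s R z.1 - Gammastar N s R z.2) * (φ z.1 - φ z.2) *
        ‖z.1 - z.2‖ ^ (-((N : ℝ) + 2 * s))) ∧
    0 ≤ ∫ z : EuclideanSpace ℝ (Fin N) × EuclideanSpace ℝ (Fin N),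
      (Gammastar N s R z.1 - Gammastar N s R z.2) * (φ z.1 - φ z.2) *
        ‖z.1 - z.2‖ ^ (-((N : ℝ) + 2 * s)) := by
  obtain ⟨L, hL⟩ := hφ_smooth.lipschitzWith_of_hasCompactSupport hφ_supp (by simp)
  have h := statement_15_general volume hs0 hs1 (by simpa using hN.le) (one_pos.trans hR) hL hφ_supp
    (fun x hx => (hφ_loc (subset_tsupport φ hx)).le) hφ_nonneg
  unfold gagliardoIntegrand fractionalKernel at h
  simpa only [finrank_euclideanSpace_fin, Gammastar, Measure.volume_eq_prod] using h
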